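/- For every x ∈ (0, π/2), the chain of inequalities cos(x/√3) < (3/4)·cos(2x/3) + 1/4 < (2/3)·cos(x/√2) + 1/3 < (16/27)·cos(3x/4) + 11/27 < sin(x)/x < (5/9)·cos(√15·x/5) + 4/9 < cos²(x/√6) < (4/9)·cos(√3·x/2) + 5/9 < (1/3)·cos(x) + 2/3 holds. -/

import Mathlib

open Real

/-!
`sin x / x` is the integral of `cos (t * x)` over `t ∈ [0, 1]`, and all the other members of the
chain are two-node quadratures of it: weight `w` at `t = 1 / √(3 * w)` and weight `1 - w` at
`t = 0`, the node being chosen so that `t ^ 2` is integrated exactly. By the half-angle formula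
such a quadrature equals `1 - x ^ 2 / 6 * sinc (x / (2 * √(3 * w))) ^ 2`, and `sinc` decreases on
`[0, π]`, so the quadratures decrease in `w`. The weights in the chain are
`1 > 3/4 > 2/3 > 16/27` before `sin x / x` and `5/9 > 1/2 > 4/9 > 1/3` after it. Comparing Taylor
polynomials places `sin x / x` between the weights `16/27` and `5/9`; the latter is the weight of
three-point Gauss–Legendre quadrature, so there the expansions agree up to `x ^ 4`.
-/

open Set Finset
open scoped Nat

/-- The sum of the first `n` nonzero terms of the Maclaurin series of `cos`, used to bound `cos` on
`[0, ∞)` from alternating sides as `n` grows. -/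
noncomputable def cosTaylorSum (n : ℕ) (x : ℝ) : ℝ :=
  ∑ i ∈ range n, (-1) ^ i * x ^ (2 * i) / (2 * i)!

/-- The sum of the first `n` nonzero terms of the Maclaurin series of `sin`, used to bound `sin` on
`[0, ∞)` from alternating sides as `n` grows. -/
noncomputable def sinTaylorSum (n : ℕ) (x : ℝ) : ℝ :=
  ∑ i ∈ range n, (-1) ^ i * x ^ (2 * i + 1) / (2 * i + 1)!

lemma hasDerivAt_pow_div_factorial (n : ℕ) (x : ℝ) :
    HasDerivAt (fun y : ℝ ↦ y ^ (n + 1) / (n + 1)!) (x ^ n / n !) x := by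
  refine ((hasDerivAt_pow (n + 1) x).div_const _).congr_deriv ?_
  rw [Nat.factorial_succ, Nat.cast_mul, Nat.add_sub_cancel,
    mul_div_mul_left _ _ (Nat.cast_ne_zero.2 n.succ_ne_zero)]

lemma hasDerivAt_sinTaylorSum (n : ℕ) (x : ℝ) :
    HasDerivAt (sinTaylorSum n) (cosTaylorSum n x) x := by
  unfold sinTaylorSum cosTaylorSum
  simp only [mul_div_assoc]
  exact HasDerivAt.fun_sum fun i _ ↦ (hasDerivAt_pow_div_factorial (2 * i) x).const_mul _

lemma hasDerivAt_cosTaylorSum_succ (n : ℕ) (x : ℝ) :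
    HasDerivAt (cosTaylorSum (n + 1)) (-sinTaylorSum n x) x := by
  unfold sinTaylorSum cosTaylorSum
  simp only [sum_range_succ', mul_div_assoc, ← sum_neg_distrib, mul_zero, pow_zero]
  refine (HasDerivAt.fun_sum fun i _ ↦ ?_).add_const _
  refine ((hasDerivAt_pow_div_factorial (2 * i + 1) x).const_mul _).congr_deriv ?_
  rw [pow_succ, mul_neg_one, neg_mul]

lemma nonneg_of_hasDerivAt_nonneg {f f' : ℝ → ℝ} (hf : ∀ x, HasDerivAt f (f' x) x) {a : ℝ}
    (ha : f a = 0) (hf' : ∀ x, a ≤ x → 0 ≤ f' x) {x : ℝ} (hx : a ≤ x) : 0 ≤ f x := by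
  have hmono : MonotoneOn f (Ici a) :=
    monotoneOn_of_hasDerivWithinAt_nonneg (convex_Ici a)
      (fun y _ ↦ (hf y).continuousAt.continuousWithinAt) (fun y _ ↦ (hf y).hasDerivWithinAt)
      fun y hy ↦ hf' y (interior_subset hy)
  exact ha ▸ hmono self_mem_Ici hx hx

lemma neg_one_pow_mul_sin_sub_sinTaylorSum_nonneg_of_cos {n : ℕ}
    (hcos : ∀ x : ℝ, 0 ≤ x → 0 ≤ (-1) ^ n * (cos x - cosTaylorSum n x)) {x : ℝ} (hx : 0 ≤ x) :
    0 ≤ (-1) ^ n * (sin x - sinTaylorSum n x) :=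
  nonneg_of_hasDerivAt_nonneg (f := fun y ↦ (-1) ^ n * (sin y - sinTaylorSum n y))
    (fun y ↦ ((hasDerivAt_sin y).sub (hasDerivAt_sinTaylorSum n y)).const_mul _)
    (by simp [sinTaylorSum]) hcos hx

lemma neg_one_pow_mul_cos_sub_cosTaylorSum_nonneg (n : ℕ) {x : ℝ} (hx : 0 ≤ x) :
    0 ≤ (-1) ^ (n + 1) * (cos x - cosTaylorSum (n + 1) x) := by
  induction n generalizing x with
  | zero => simpa [cosTaylorSum] using cos_le_one x
  | succ n ih =>
    refine nonneg_of_hasDerivAt_nonneg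
      (f := fun y ↦ (-1) ^ (n + 2) * (cos y - cosTaylorSum (n + 2) y))
      (fun y ↦ ((hasDerivAt_cos y).sub (hasDerivAt_cosTaylorSum_succ (n + 1) y)).const_mul _)
      (by simp [cosTaylorSum, sum_range_succ']) (fun y hy ↦ ?_) hx
    have hsin := neg_one_pow_mul_sin_sub_sinTaylorSum_nonneg_of_cos (fun _ ↦ ih) hy
    rw [pow_succ]
    linarith

lemma neg_one_pow_mul_sin_sub_sinTaylorSum_nonneg (n : ℕ) {x : ℝ} (hx : 0 ≤ x) :
    0 ≤ (-1) ^ (n + 1) * (sin x - sinTaylorSum (n + 1) x) :=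
  neg_one_pow_mul_sin_sub_sinTaylorSum_nonneg_of_cos
    (fun _ ↦ neg_one_pow_mul_cos_sub_cosTaylorSum_nonneg n) hx

lemma strictAntiOn_sinc : StrictAntiOn sinc (Icc 0 π) := by
  rintro a ⟨ha, -⟩ b ⟨-, hb⟩ hab
  have hb₀ : 0 < b := ha.trans_lt hab
  rw [sinc_of_ne_zero hb₀.ne']
  rcases ha.eq_or_lt with rfl | ha₀
  · rw [sinc_zero, div_lt_one hb₀]
    exact sin_lt hb₀
  · rw [sinc_of_ne_zero ha₀.ne']
    simpa using strictConcaveOn_sin_Icc.secant_strict_mono ⟨le_rfl, pi_pos.le⟩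
      ⟨ha, (hab.trans_le hb).le⟩ ⟨hb₀.le, hb⟩ ha₀.ne' hb₀.ne' hab

/-- The quadrature of `∫ t in 0..1, cos (t * x) = sin x / x` with weight `w` at the node
`t = 1 / √(3 * w)` and weight `1 - w` at `t = 0`; it is meaningful for `0 < w`. -/
noncomputable def cosQuadrature (w x : ℝ) : ℝ :=
  w * cos (x / √(3 * w)) + (1 - w)

lemma cosQuadrature_eq_of_sq {w x y : ℝ} (hw : 0 < w) (hy : 3 * w * y ^ 2 = x ^ 2) :
    cosQuadrature w x = w * cos y + (1 - w) := by
  have hsq : (x / √(3 * w)) ^ 2 = y ^ 2 := by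
    rw [div_pow, sq_sqrt (by positivity), ← hy, mul_div_cancel_left₀ _ (by positivity)]
  rcases sq_eq_sq_iff_eq_or_eq_neg.1 hsq with h | h <;>
    simp only [cosQuadrature, h, cos_neg]

lemma cosQuadrature_eq_sinc {w : ℝ} (hw : 0 < w) (x : ℝ) :
    cosQuadrature w x = 1 - x ^ 2 / 6 * sinc (x / (2 * √(3 * w))) ^ 2 := by
  rcases eq_or_ne x 0 with rfl | hx
  · simp [cosQuadrature]
  have hsq : (x / (2 * √(3 * w))) ^ 2 = x ^ 2 / (12 * w) := by
    rw [div_pow, mul_pow, sq_sqrt (by positivity)]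
    ring
  have half_angle : cos (x / √(3 * w)) = 1 - 2 * sin (x / (2 * √(3 * w))) ^ 2 := by
    rw [show x / √(3 * w) = 2 * (x / (2 * √(3 * w))) by ring, cos_two_mul, cos_sq']
    ring
  rw [cosQuadrature, half_angle, sinc_of_ne_zero (by positivity), div_pow, hsq]
  field_simp
  ring

lemma cosQuadrature_lt_cosQuadrature {v w x : ℝ} (hx : 0 < x) (hxv : x ≤ 2 * π * √(3 * v))
    (hvw : v < w) : cosQuadrature w x < cosQuadrature v x := by
  have hv : 0 < v := by
    by_contra! hv
    rw [sqrt_eq_zero_of_nonpos (by linarith), mul_zero] at hxv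
    exact hxv.not_gt hx
  have hw : 0 < w := hv.trans hvw
  have harg_lt : x / (2 * √(3 * w)) < x / (2 * √(3 * v)) := by gcongr
  have harg_le : x / (2 * √(3 * v)) ≤ π := by
    rw [div_le_iff₀ (by positivity)]
    linarith
  have hsinc : sinc (x / (2 * √(3 * v))) < sinc (x / (2 * √(3 * w))) :=
    strictAntiOn_sinc ⟨by positivity, harg_lt.le.trans harg_le⟩ ⟨by positivity, harg_le⟩ harg_lt
  have hsinc_nonneg : 0 ≤ sinc (x / (2 * √(3 * v))) := by
    rw [sinc_of_ne_zero (by positivity)]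
    exact div_nonneg (sin_nonneg_of_nonneg_of_le_pi (by positivity) harg_le) (by positivity)
  rw [cosQuadrature_eq_sinc hw, cosQuadrature_eq_sinc hv]
  gcongr

lemma strictAntiOn_cosQuadrature {x : ℝ} (hx : 0 < x) (hx' : x ≤ 2 * π) :
    StrictAntiOn (fun w ↦ cosQuadrature w x) (Ici (1 / 3)) := by
  intro v hv w _ hvw
  refine cosQuadrature_lt_cosQuadrature hx (hx'.trans ?_) hvw
  refine le_mul_of_one_le_right (by positivity) (one_le_sqrt.2 ?_)
  linarith [mem_Ici.1 hv]

lemma sq_lt_ten_of_le_pi {x : ℝ} (hx : 0 ≤ x) (hx' : x ≤ π) : x ^ 2 < 10 := by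
  nlinarith [pi_lt_d2]

lemma cosQuadrature_lt_sin_div {x : ℝ} (hx : 0 < x) (hx' : x ≤ π) :
    cosQuadrature (16 / 27) x < sin x / x := by
  have hx_sq : x ^ 2 < 10 := sq_lt_ten_of_le_pi hx.le hx'
  calc
    cosQuadrature (16 / 27) x = 16 / 27 * cos (3 * x / 4) + (1 - 16 / 27) :=
      cosQuadrature_eq_of_sq (by norm_num) (by ring)
    _ ≤ 1 - x ^ 2 / 6 + x ^ 4 / 128 - 3 * x ^ 6 / 20480 + 27 * x ^ 8 / 18350080 := by
      have hcos := neg_one_pow_mul_cos_sub_cosTaylorSum_nonneg 4 (x := 3 * x / 4) (by positivity)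
      norm_num [cosTaylorSum, sum_range_succ, Nat.factorial] at hcos
      linarith
    _ < 1 - x ^ 2 / 6 + x ^ 4 / 120 - x ^ 6 / 5040 + x ^ 8 / 362880 - x ^ 10 / 39916800 := by
      have h₄ : 0 < x ^ 4 := by positivity
      have h₆ : x ^ 4 * x ^ 2 < x ^ 4 * 10 := by gcongr
      have h₈ : 0 < x ^ 8 := by positivity
      have h₁₀ : x ^ 8 * x ^ 2 < x ^ 8 * 10 := by gcongr
      linarith
    _ ≤ sin x / x := by
      have hsin := neg_one_pow_mul_sin_sub_sinTaylorSum_nonneg 5 hx.le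
      norm_num [sinTaylorSum, sum_range_succ, Nat.factorial] at hsin
      rw [le_div_iff₀ hx]
      linarith

lemma sin_div_lt_cosQuadrature {x : ℝ} (hx : 0 < x) (hx' : x ≤ π) :
    sin x / x < cosQuadrature (5 / 9) x := by
  have hx_sq : x ^ 2 < 10 := sq_lt_ten_of_le_pi hx.le hx'
  obtain ⟨y, hy, hy_sq⟩ : ∃ y : ℝ, 0 ≤ y ∧ y ^ 2 = 3 / 5 * x ^ 2 :=
    ⟨√(3 / 5 * x ^ 2), sqrt_nonneg _, sq_sqrt (by positivity)⟩
  calc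
    sin x / x ≤ 1 - x ^ 2 / 6 + x ^ 4 / 120 - x ^ 6 / 5040 + x ^ 8 / 362880 := by
      have hsin := neg_one_pow_mul_sin_sub_sinTaylorSum_nonneg 4 hx.le
      norm_num [sinTaylorSum, sum_range_succ, Nat.factorial] at hsin
      rw [div_le_iff₀ hx]
      linarith
    _ < 1 - x ^ 2 / 6 + x ^ 4 / 120 - x ^ 6 / 6000 := by
      have h₆ : 0 < x ^ 6 := by positivity
      have h₈ : x ^ 6 * x ^ 2 < x ^ 6 * 10 := by gcongr
      linarith
    _ ≤ 5 / 9 * cos y + (1 - 5 / 9) := by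
      have hcos := neg_one_pow_mul_cos_sub_cosTaylorSum_nonneg 3 hy
      norm_num [cosTaylorSum, sum_range_succ, Nat.factorial, pow_mul, hy_sq] at hcos
      linarith
    _ = cosQuadrature (5 / 9) x := (cosQuadrature_eq_of_sq (by norm_num) (by linarith)).symm

theorem stmt_11_general {x : ℝ} (hx : 0 < x) (hx' : x ≤ π) :
    cos (x / √3) < 3 / 4 * cos (2 * x / 3) + 1 / 4 ∧
    3 / 4 * cos (2 * x / 3) + 1 / 4 < 2 / 3 * cos (x / √2) + 1 / 3 ∧
    2 / 3 * cos (x / √2) + 1 / 3 < 16 / 27 * cos (3 * x / 4) + 11 / 27 ∧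
    16 / 27 * cos (3 * x / 4) + 11 / 27 < sin x / x ∧
    sin x / x < 5 / 9 * cos (√15 * x / 5) + 4 / 9 ∧
    5 / 9 * cos (√15 * x / 5) + 4 / 9 < cos (x / √6) ^ 2 ∧
    cos (x / √6) ^ 2 < 4 / 9 * cos (√3 * x / 2) + 5 / 9 ∧
    4 / 9 * cos (√3 * x / 2) + 5 / 9 < 1 / 3 * cos x + 2 / 3 := by
  have anti {v w : ℝ} (hv : 1 / 3 ≤ v) (hvw : v < w) : cosQuadrature w x < cosQuadrature v x :=
    strictAntiOn_cosQuadrature hx (by linarith) hv (hv.trans hvw.le) hvw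
  have weight_one : cosQuadrature 1 x = cos (x / √3) := by
    simp [cosQuadrature]
  have weight_three_quarters : cosQuadrature (3 / 4) x = 3 / 4 * cos (2 * x / 3) + 1 / 4 := by
    rw [cosQuadrature_eq_of_sq (y := 2 * x / 3)] <;> grind
  have weight_two_thirds : cosQuadrature (2 / 3) x = 2 / 3 * cos (x / √2) + 1 / 3 := by
    rw [cosQuadrature_eq_of_sq (y := x / √2)] <;> grind
  have weight_sixteen_twentysevenths :
      cosQuadrature (16 / 27) x = 16 / 27 * cos (3 * x / 4) + 11 / 27 := by
    rw [cosQuadrature_eq_of_sq (y := 3 * x / 4)] <;> grind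
  have weight_five_ninths : cosQuadrature (5 / 9) x = 5 / 9 * cos (√15 * x / 5) + 4 / 9 := by
    rw [cosQuadrature_eq_of_sq (y := √15 * x / 5)] <;> grind
  have weight_half : cosQuadrature (1 / 2) x = cos (x / √6) ^ 2 := by
    rw [cosQuadrature_eq_of_sq (y := 2 * (x / √6)), cos_two_mul] <;> grind
  have weight_four_ninths : cosQuadrature (4 / 9) x = 4 / 9 * cos (√3 * x / 2) + 5 / 9 := by
    rw [cosQuadrature_eq_of_sq (y := √3 * x / 2)] <;> grind
  have weight_third : cosQuadrature (1 / 3) x = 1 / 3 * cos x + 2 / 3 := by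
    rw [cosQuadrature_eq_of_sq (y := x)] <;> grind
  rw [← weight_one, ← weight_three_quarters, ← weight_two_thirds,
    ← weight_sixteen_twentysevenths, ← weight_five_ninths, ← weight_half,
    ← weight_four_ninths, ← weight_third]
  refine ⟨anti ?_ ?_, anti ?_ ?_, anti ?_ ?_, cosQuadrature_lt_sin_div hx hx',
    sin_div_lt_cosQuadrature hx hx', anti ?_ ?_, anti ?_ ?_, anti ?_ ?_⟩ <;> norm_num

/-- For `x ∈ (0, π/2)`, the chain of inequalities
`cos(x/√3) < (3/4)cos(2x/3) + 1/4 < (2/3)cos(x/√2) + 1/3 < (16/27)cos(3x/4) + 11/27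
 < sin x / x < (5/9)cos(√15 x/5) + 4/9 < cos²(x/√6) < (4/9)cos(√3 x/2) + 5/9
 < (1/3)cos x + 2/3`. -/
theorem stmt_11 (x : ℝ) (hx : x ∈ Set.Ioo (0 : ℝ) (π / 2)) :
    Real.cos (x / Real.sqrt 3) < 3 / 4 * Real.cos (2 * x / 3) + 1 / 4 ∧
    3 / 4 * Real.cos (2 * x / 3) + 1 / 4 < 2 / 3 * Real.cos (x / Real.sqrt 2) + 1 / 3 ∧
    2 / 3 * Real.cos (x / Real.sqrt 2) + 1 / 3 < 16 / 27 * Real.cos (3 * x / 4) + 11 / 27 ∧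
    16 / 27 * Real.cos (3 * x / 4) + 11 / 27 < Real.sin x / x ∧
    Real.sin x / x < 5 / 9 * Real.cos (Real.sqrt 15 * x / 5) + 4 / 9 ∧
    5 / 9 * Real.cos (Real.sqrt 15 * x / 5) + 4 / 9 < Real.cos (x / Real.sqrt 6) ^ 2 ∧
    Real.cos (x / Real.sqrt 6) ^ 2 < 4 / 9 * Real.cos (Real.sqrt 3 * x / 2) + 5 / 9 ∧
    4 / 9 * Real.cos (Real.sqrt 3 * x / 2) + 5 / 9 < 1 / 3 * Real.cos x + 2 / 3 :=
  stmt_11_general hx.1 (by linarith [hx.1, hx.2])
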